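/- Let A be a Noetherian integral domain. Then A is a Dedekind domain if and only if (𝔞 ∩ 𝔟)(𝔞 + 𝔟) = 𝔞𝔟 holds for every pair of ideals 𝔞, 𝔟 of A. -/

import Mathlib

/-!
If `I` and `J` are invertible, then so is `I * J = (I ⊓ J) * (I ⊔ J)`, and hence so is its factor
`I ⊔ J`. Starting from nonzero principal ideals, adding one generator at a time shows that every
nonzero finitely generated ideal is invertible.
-/

section Invertible

open FractionalIdeal
open scoped nonZeroDivisors

theorem isUnit_coeIdeal_sup {R P : Type*} [CommRing R] {S : Submonoid R} [CommRing P]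
    [Algebra R P] {I J : Ideal R} (h : (I ⊓ J) * (I ⊔ J) = I * J)
    (hI : IsUnit (I : FractionalIdeal S P)) (hJ : IsUnit (J : FractionalIdeal S P)) :
    IsUnit ((I ⊔ J : Ideal R) : FractionalIdeal S P) := by
  have hmul : IsUnit (((I ⊓ J) * (I ⊔ J) : Ideal R) : FractionalIdeal S P) := by
    rw [h, coeIdeal_mul]
    exact hI.mul hJ
  rw [coeIdeal_mul] at hmul
  exact isUnit_of_mul_isUnit_right hmul

variable {R : Type*} [CommRing R] [IsDomain R] (K : Type*) [Field K] [Algebra R K]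
  [IsFractionRing R K]

theorem isUnit_coeIdeal_of_fg_of_inf_mul_sup
    (h : ∀ I J : Ideal R, I.FG → J.FG → (I ⊓ J) * (I ⊔ J) = I * J)
    {I : Ideal R} (hfg : I.FG) (hI : I ≠ ⊥) : IsUnit (I : FractionalIdeal R⁰ K) := by
  induction I, hfg using Submodule.fg_induction with
  | singleton x =>
    have hx : x ≠ 0 := mt Ideal.span_singleton_eq_bot.mpr hI
    exact .of_mul_eq_one _ (coe_ideal_span_singleton_mul_inv K hx)
  | sup I J hIfg hJfg ihI ihJ =>
    obtain rfl | hI₀ := eq_or_ne I ⊥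
    · rw [bot_sup_eq] at hI ⊢
      exact ihJ hI
    obtain rfl | hJ₀ := eq_or_ne J ⊥
    · rw [sup_bot_eq] at hI ⊢
      exact ihI hI
    exact isUnit_coeIdeal_sup (h I J hIfg hJfg) (ihI hI₀) (ihJ hJ₀)

theorem isDedekindDomain_of_isUnit_coeIdeal
    (h : ∀ I : Ideal R, I ≠ ⊥ → IsUnit (I : FractionalIdeal R⁰ K)) : IsDedekindDomain R := by
  refine (isDedekindDomain_iff_mul_inv_cancel (K := K)).mpr fun I hI => ?_
  have hnum : IsUnit (I.num : FractionalIdeal R⁰ K) :=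
    h I.num (mt num_eq_zero_iff.mp hI)
  rw [← den_mul_self_eq_num'] at hnum
  exact (mul_inv_cancel_iff_isUnit K).mpr (isUnit_of_mul_isUnit_right hnum)

end Invertible

theorem statement7 {A : Type*} [CommRing A] [IsDomain A] [IsNoetherianRing A] :
    IsDedekindDomain A ↔ ∀ a b : Ideal A, (a ⊓ b) * (a + b) = a * b := by
  simp only [Ideal.add_eq_sup]
  constructor
  · intro _ a b
    rw [mul_comm, Ideal.sup_mul_inf]
  · intro h
    exact isDedekindDomain_of_isUnit_coeIdeal (FractionRing A) fun I hI =>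
      isUnit_coeIdeal_of_fg_of_inf_mul_sup _ (fun a b _ _ => h a b) I.fg_of_isNoetherianRing hI
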